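/- arXiv:2405.08692 — 4 statements merged into one kernel-verified Lean document; each statement's English description precedes it below -/
import Mathlib

section
/- Let D ⊆ ℂ be a nonempty open, connected, simply connected symmetric set with D ∩ ℝ ≠ ∅ whose closure is homeomorphic to the closed unit disc, and let x₀ ∈ D ∩ ℝ. Then there exists a continuous map H : D × [0,1] → D such that H(z,1) = z and H(z,0) = x₀ for all z ∈ D, and for every t ∈ [0,1] the map z ↦ H(z,t) is holomorphic on D and Schwarz symmetric, i.e. H(conj z, t) = conj(H(z,t)). -/
open Set Metric Filter Topology
open scoped ComplexConjugate

/-- A holomorphic injection of `U` into the unit disc with nowhere vanishing derivative. -/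
structure IsUnivalentIntoDisc (U : Set ℂ) (f : ℂ → ℂ) : Prop where
  differentiableOn : DifferentiableOn ℂ f U
  mapsTo : MapsTo f U (ball 0 1)
  injOn : InjOn f U
  deriv_ne_zero : ∀ z ∈ U, deriv f z ≠ 0

/-- The disc automorphism sending `w` to `0`. -/
noncomputable def discAutomorphism (w z : ℂ) : ℂ := (z - w) / (1 - conj w * z)

theorem one_sub_conj_mul_ne_zero {w z : ℂ} (hw : ‖w‖ < 1) (hz : ‖z‖ < 1) :
    1 - conj w * z ≠ 0 := by
  intro h
  have h' : ‖conj w * z‖ = 1 := by rw [← sub_eq_zero.mp h]; simp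
  rw [norm_mul, Complex.norm_conj] at h'
  nlinarith [norm_nonneg w, norm_nonneg z]

theorem one_sub_conj_mul_self_ne_zero {w : ℂ} (hw : ‖w‖ < 1) : 1 - conj w * w ≠ 0 :=
  one_sub_conj_mul_ne_zero hw hw

theorem norm_discAutomorphism_lt_one {w z : ℂ} (hw : ‖w‖ < 1) (hz : ‖z‖ < 1) :
    ‖discAutomorphism w z‖ < 1 := by
  have h := one_sub_conj_mul_ne_zero hw hz
  rw [discAutomorphism, norm_div, div_lt_one (norm_pos_iff.mpr h),
    ← sq_lt_sq₀ (norm_nonneg _) (norm_nonneg _), Complex.sq_norm, Complex.sq_norm]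
  have hw' : Complex.normSq w < 1 := by
    rw [← Complex.sq_norm]; nlinarith [norm_nonneg w]
  have hz' : Complex.normSq z < 1 := by
    rw [← Complex.sq_norm]; nlinarith [norm_nonneg z]
  simp only [Complex.normSq_apply, Complex.sub_re, Complex.sub_im, Complex.mul_re, Complex.mul_im,
    Complex.conj_re, Complex.conj_im, Complex.one_re, Complex.one_im] at hw' hz' ⊢
  nlinarith [mul_pos (sub_pos.mpr hw') (sub_pos.mpr hz')]

theorem discAutomorphism_injOn {w : ℂ} (hw : ‖w‖ < 1) :
    InjOn (discAutomorphism w) (ball 0 1) := by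
  intro a ha b hb hab
  rw [mem_ball_zero_iff] at ha hb
  rw [discAutomorphism, discAutomorphism, div_eq_div_iff (one_sub_conj_mul_ne_zero hw ha)
    (one_sub_conj_mul_ne_zero hw hb)] at hab
  have h : (1 - conj w * w) * (a - b) = 0 := by linear_combination hab
  exact sub_eq_zero.mp ((mul_eq_zero.mp h).resolve_left (one_sub_conj_mul_self_ne_zero hw))

theorem hasDerivAt_discAutomorphism {w z : ℂ} (hw : ‖w‖ < 1) (hz : ‖z‖ < 1) :
    HasDerivAt (discAutomorphism w) ((1 - conj w * w) / (1 - conj w * z) ^ 2) z := by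
  have h := one_sub_conj_mul_ne_zero hw hz
  refine (((hasDerivAt_id z).sub_const w).div
    (((hasDerivAt_id z).const_mul (conj w)).const_sub 1) h).congr_deriv ?_
  simp only [id]
  ring

theorem IsUnivalentIntoDisc.hasDerivAt_discAutomorphism_comp {U : Set ℂ} {f : ℂ → ℂ}
    (hf : IsUnivalentIntoDisc U f) (hU : IsOpen U) {w z : ℂ} (hw : ‖w‖ < 1) (hz : z ∈ U) :
    HasDerivAt (discAutomorphism w ∘ f)
      ((1 - conj w * w) / (1 - conj w * f z) ^ 2 * deriv f z) z :=
  (hasDerivAt_discAutomorphism hw (mem_ball_zero_iff.mp (hf.mapsTo hz))).comp z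
    (hf.differentiableOn.differentiableAt (hU.mem_nhds hz)).hasDerivAt

theorem IsUnivalentIntoDisc.discAutomorphism_comp {U : Set ℂ} {f : ℂ → ℂ}
    (hf : IsUnivalentIntoDisc U f) (hU : IsOpen U) {w : ℂ} (hw : ‖w‖ < 1) :
    IsUnivalentIntoDisc U (discAutomorphism w ∘ f) where
  differentiableOn z hz :=
    (hf.hasDerivAt_discAutomorphism_comp hU hw hz).differentiableAt.differentiableWithinAt
  mapsTo z hz := mem_ball_zero_iff.mpr
    (norm_discAutomorphism_lt_one hw (mem_ball_zero_iff.mp (hf.mapsTo hz)))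
  injOn := (discAutomorphism_injOn hw).comp hf.injOn hf.mapsTo
  deriv_ne_zero z hz := by
    rw [(hf.hasDerivAt_discAutomorphism_comp hU hw hz).deriv]
    exact mul_ne_zero (div_ne_zero (one_sub_conj_mul_self_ne_zero hw) (pow_ne_zero 2
      (one_sub_conj_mul_ne_zero hw (mem_ball_zero_iff.mp (hf.mapsTo hz))))) (hf.deriv_ne_zero z hz)

/-- A continuous square root of a differentiable function is differentiable away from zeros. -/
theorem HasDerivAt.of_sq_eq {g h : ℂ → ℂ} {g' z : ℂ} (hg : HasDerivAt g g' z)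
    (hh : ContinuousAt h z) (hsq : ∀ x, h x ^ 2 = g x) (hz : h z ≠ 0) :
    HasDerivAt h (g' / (2 * h z)) z := by
  rw [hasDerivAt_iff_tendsto_slope] at hg ⊢
  have hsum : Tendsto (fun x => h x + h z) (𝓝[≠] z) (𝓝 (2 * h z)) := by
    rw [two_mul]
    exact (hh.tendsto.mono_left nhdsWithin_le_nhds).add_const _
  have hne : 2 * h z ≠ 0 := mul_ne_zero two_ne_zero hz
  refine (hg.div hsum hne).congr' ?_
  filter_upwards [hsum.eventually_ne hne] with x hx
  simp only [Pi.div_apply, slope_def_field, ← hsq]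
  rw [div_div, mul_comm (x - z), ← div_div]
  congr 1
  rw [div_eq_iff hx]
  ring

theorem IsUnivalentIntoDisc.exists_sqrt {U : Set ℂ} {g : ℂ → ℂ}
    (hg : IsUnivalentIntoDisc U g) (hU : IsOpen U) (hUc : IsSimplyConnected U)
    (hg0 : ∀ z ∈ U, g z ≠ 0) :
    ∃ h : ℂ → ℂ, IsUnivalentIntoDisc U h ∧ (∀ z, h z ^ 2 = g z) ∧
      ∀ z ∈ U, deriv h z = deriv g z / (2 * h z) := by
  obtain ⟨h, hc, hsq⟩ := Complex.exists_continuousOn_pow_eq hUc hU hg.differentiableOn.continuousOn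
    (by rintro ⟨z, hz, h0⟩; exact hg0 z hz h0) two_ne_zero
  have h0 : ∀ z ∈ U, h z ≠ 0 := fun z hz hzero => hg0 z hz (by rw [← hsq, hzero]; simp)
  have hd : ∀ z ∈ U, HasDerivAt h (deriv g z / (2 * h z)) z := fun z hz =>
    (hg.differentiableOn.differentiableAt (hU.mem_nhds hz)).hasDerivAt.of_sq_eq
      (hc.continuousAt (hU.mem_nhds hz)) hsq (h0 z hz)
  refine ⟨h, ⟨fun z hz => (hd z hz).differentiableAt.differentiableWithinAt, fun z hz => ?_,
    fun a ha b hb hab => hg.injOn ha hb (by rw [← hsq, ← hsq, hab]), fun z hz => ?_⟩, hsq,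
    fun z hz => (hd z hz).deriv⟩
  · have := mem_ball_zero_iff.mp (hg.mapsTo hz)
    rw [← hsq, norm_pow] at this
    exact mem_ball_zero_iff.mpr ((pow_lt_one_iff_of_nonneg (norm_nonneg _) two_ne_zero).mp this)
  · rw [(hd z hz).deriv]
    exact div_ne_zero (hg.deriv_ne_zero z hz) (mul_ne_zero two_ne_zero (h0 z hz))

/-- Koebe's square root trick: a univalent map into the disc that omits a value can be replaced
by one with larger derivative at the base point. -/
theorem IsUnivalentIntoDisc.exists_norm_deriv_lt {U : Set ℂ} {f : ℂ → ℂ} {x₀ w : ℂ}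
    (hf : IsUnivalentIntoDisc U f) (hU : IsOpen U) (hUc : IsSimplyConnected U)
    (hx₀ : x₀ ∈ U) (hf0 : f x₀ = 0) (hw : ‖w‖ < 1) (hwf : w ∉ f '' U) :
    ∃ F : ℂ → ℂ, IsUnivalentIntoDisc U F ∧ F x₀ = 0 ∧ ‖deriv f x₀‖ < ‖deriv F x₀‖ := by
  have hg := hf.discAutomorphism_comp hU hw
  have hg0 : ∀ z ∈ U, (discAutomorphism w ∘ f) z ≠ 0 := fun z hz => div_ne_zero
    (sub_ne_zero.mpr fun h => hwf ⟨z, hz, h⟩)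
    (one_sub_conj_mul_ne_zero hw (mem_ball_zero_iff.mp (hf.mapsTo hz)))
  obtain ⟨h, hh, hsq, hdh⟩ := hg.exists_sqrt hU hUc hg0
  have hb : ‖h x₀‖ < 1 := mem_ball_zero_iff.mp (hh.mapsTo hx₀)
  have hnorm : ‖h x₀‖ ^ 2 = ‖w‖ := by
    rw [← norm_pow, hsq]
    simp [discAutomorphism, hf0]
  have hw0 : 0 < ‖w‖ := norm_pos_iff.mpr fun h0 => hwf ⟨x₀, hx₀, by rw [hf0, h0]⟩
  have hb0 : 0 < ‖h x₀‖ := by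
    by_contra hcon
    have : ‖h x₀‖ = 0 := le_antisymm (not_lt.mp hcon) (norm_nonneg _)
    rw [this] at hnorm
    simp at hnorm
    simp [← hnorm] at hw0
  refine ⟨discAutomorphism (h x₀) ∘ h, hh.discAutomorphism_comp hU hb, by simp [discAutomorphism],
    ?_⟩
  have hone : ∀ a : ℂ, ‖a‖ < 1 → ‖1 - conj a * a‖ = 1 - ‖a‖ ^ 2 := by
    intro a ha
    rw [Complex.conj_mul']
    have : (1 : ℂ) - (‖a‖ : ℂ) ^ 2 = ((1 - ‖a‖ ^ 2 : ℝ) : ℂ) := by push_cast; rfl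
    rw [this, Complex.norm_real, Real.norm_of_nonneg]
    nlinarith [norm_nonneg a]
  rw [(hh.hasDerivAt_discAutomorphism_comp hU hb hx₀).deriv, hdh x₀ hx₀,
    (hf.hasDerivAt_discAutomorphism_comp hU hw hx₀).deriv, hf0]
  simp only [norm_mul, norm_div, norm_pow, hone _ hb, hone _ hw, mul_zero, sub_zero,
    one_pow, div_one, Complex.norm_ofNat]
  have hpos : 0 < ‖deriv f x₀‖ := norm_pos_iff.mpr (hf.deriv_ne_zero x₀ hx₀)
  set b := ‖h x₀‖
  rw [← hnorm]
  have h1 : 0 < 1 - b ^ 2 := by nlinarith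
  rw [show (1 - b ^ 2) / (1 - b ^ 2) ^ 2 * ((1 - (b ^ 2) ^ 2) * ‖deriv f x₀‖ / (2 * b))
    = ‖deriv f x₀‖ * ((1 + b ^ 2) / (2 * b)) by field_simp; ring]
  refine lt_mul_of_one_lt_right hpos ((one_lt_div (by positivity)).mpr ?_)
  nlinarith [sq_pos_of_pos (sub_pos.mpr hb)]

/-- **Montel's theorem** along an ultrafilter. -/
theorem exists_tendstoLocallyUniformlyOn_of_mapsTo_ball {ι : Type*} (l : Ultrafilter ι)
    {U : Set ℂ} (hU : IsOpen U) {F : ι → ℂ → ℂ} (hd : ∀ i, DifferentiableOn ℂ (F i) U)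
    (hF : ∀ i, MapsTo (F i) U (ball 0 1)) :
    ∃ f : ℂ → ℂ, TendstoLocallyUniformlyOn F f l U := by
  have hlim : ∀ z, ∃ a, z ∈ U → Tendsto (fun i => F i z) l (𝓝 a) := by
    intro z
    by_cases hz : z ∈ U
    · obtain ⟨a, -, ha⟩ := (isCompact_closedBall (0 : ℂ) 1).ultrafilter_le_nhds
        (l.map fun i => F i z) (le_principal_iff.mpr <|
          mem_map.mpr <| univ_mem' fun i => ball_subset_closedBall (hF i hz))
      exact ⟨a, fun _ => ha⟩
    · exact ⟨0, fun h => absurd h hz⟩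
  choose f hf using hlim
  refine ⟨f, Metric.tendstoLocallyUniformlyOn_iff.mpr fun ε hε x hx => ?_⟩
  obtain ⟨r, hr, hrU⟩ := Metric.isOpen_iff.mp hU x hx
  have hlip : ∀ i, ∀ y ∈ ball x r, dist (F i y) (F i x) ≤ 2 / r * dist y x := by
    refine fun i y hy => Complex.dist_le_div_mul_dist_of_mapsTo_ball ((hd i).mono hrU)
      (fun z hz => ?_) hy
    have h1 := mem_ball_zero_iff.mp (hF i (hrU hz))
    have h2 := mem_ball_zero_iff.mp (hF i hx)
    rw [mem_closedBall, dist_eq_norm]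
    linarith [norm_sub_le (F i z) (F i x)]
  have hlip' : ∀ y ∈ ball x r, dist (f y) (f x) ≤ 2 / r * dist y x := fun y hy =>
    le_of_tendsto ((hf y (hrU hy)).dist (hf x hx)) (Eventually.of_forall fun i => hlip i y hy)
  have hsmall : ∀ᶠ y in 𝓝 x, 2 / r * dist y x < ε / 3 := by
    have : Tendsto (fun y => 2 / r * dist y x) (𝓝 x) (𝓝 (2 / r * dist x x)) :=
      (tendsto_id.dist tendsto_const_nhds).const_mul _
    rw [dist_self, mul_zero] at this
    exact this.eventually_lt_const (by positivity)
  refine ⟨{y | y ∈ ball x r ∧ 2 / r * dist y x < ε / 3},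
    nhdsWithin_le_nhds (inter_mem (ball_mem_nhds x hr) hsmall), ?_⟩
  filter_upwards [Metric.tendsto_nhds.mp (hf x hx) (ε / 3) (by positivity)] with i hi y hy
  have h1 := hlip i y hy.1
  have h2 := hlip' y hy.1
  have h3 := dist_triangle4 (f y) (f x) (F i x) (F i y)
  rw [dist_comm (F i x) (F i y), dist_comm (f x)] at h3
  linarith [hy.2]

/-- **Hurwitz's theorem**: if a locally uniform limit of nowhere vanishing holomorphic functions
vanishes at a point, then it vanishes near that point. -/
theorem eventually_eq_zero_of_tendstoLocallyUniformlyOn {ι : Type*} {l : Filter ι} [l.NeBot]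
    {U : Set ℂ} (hU : IsOpen U) {F : ι → ℂ → ℂ} {f : ℂ → ℂ}
    (hd : ∀ i, DifferentiableOn ℂ (F i) U) (hF : TendstoLocallyUniformlyOn F f l U)
    (hne : ∀ i, ∀ z ∈ U, F i z ≠ 0) {a : ℂ} (ha : a ∈ U) (hfa : f a = 0) :
    ∀ᶠ z in 𝓝 a, f z = 0 := by
  have hfd : DifferentiableOn ℂ f U := hF.differentiableOn (Eventually.of_forall hd) hU
  have han : AnalyticAt ℂ f a := hfd.analyticAt (hU.mem_nhds ha)
  refine han.eventually_eq_zero_or_eventually_ne_zero.resolve_right fun hiso => ?_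
  rw [eventually_nhdsWithin_iff] at hiso
  obtain ⟨r, hr, hrU⟩ := Metric.nhds_basis_closedBall.mem_iff.mp
    (hiso.and (hU.mem_nhds ha))
  have hsub : closedBall a r ⊆ U := fun z hz => (hrU hz).2
  obtain ⟨p, hp, hmin⟩ := (isCompact_sphere a r).exists_isMinOn
    (NormedSpace.sphere_nonempty.mpr hr.le)
    (hfd.continuousOn.mono (sphere_subset_closedBall.trans hsub)).norm
  have hm : 0 < ‖f p‖ :=
    norm_pos_iff.mpr ((hrU (sphere_subset_closedBall hp)).1 (ne_of_mem_sphere hp hr.ne'))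
  have hunif := (tendstoLocallyUniformlyOn_iff_forall_isCompact hU).mp hF _ hsub
    (isCompact_closedBall a r)
  obtain ⟨i, hi⟩ := (Metric.tendstoUniformlyOn_iff.mp hunif (‖f p‖ / 4) (by positivity)).exists
  have hia : ‖F i a‖ < ‖f p‖ / 4 := by
    simpa [hfa] using hi a (mem_closedBall_self hr.le)
  have hbd : ∀ z ∈ sphere a r, ‖f p‖ / 2 ≤ ‖F i z - F i a‖ := by
    intro z hz
    have h1 : ‖f p‖ ≤ ‖f z‖ := hmin hz
    have h2 := hi z (sphere_subset_closedBall hz)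
    rw [dist_eq_norm] at h2
    have h3 := norm_sub_norm_le (f z) (f z - (F i z - F i a))
    have h4 := norm_add_le (f z - F i z) (F i a)
    rw [show f z - (f z - (F i z - F i a)) = F i z - F i a by ring,
      show f z - (F i z - F i a) = f z - F i z + F i a by ring] at h3
    linarith
  have hfreq : ∃ᶠ z in 𝓝 a, F i z ≠ F i a := by
    intro hcon
    simp only [not_not] at hcon
    have heq := ((hd i).mono hsub |>.mono ball_subset_closedBall |>.analyticOnNhd
      isOpen_ball).eqOn_of_preconnected_of_eventuallyEq analyticOnNhd_const
      (convex_ball a r).isPreconnected (mem_ball_self hr) hcon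
    have hcl := heq.of_subset_closure ((hd i).continuousOn.mono hsub) continuousOn_const
      ball_subset_closedBall (closure_ball a hr.ne').ge
    have := hbd p hp
    rw [hcl (sphere_subset_closedBall hp)] at this
    rw [sub_self, norm_zero] at this
    linarith
  have hdc : DiffContOnCl ℂ (F i) (ball a r) :=
    DifferentiableOn.diffContOnCl (by rw [closure_ball a hr.ne']; exact (hd i).mono hsub)
  obtain ⟨z, hz, hz0⟩ := hdc.ball_subset_image_closedBall hr hbd hfreq
    (show (0 : ℂ) ∈ ball (F i a) (‖f p‖ / 2 / 2) by
      rw [mem_ball, dist_zero_left]; linarith)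
  exact hne i z (hsub hz) hz0

/-- A locally uniform limit of univalent maps into the disc, fixing the value `0` at `x₀`, is again
univalent provided that its derivative at `x₀` does not vanish. -/
theorem IsUnivalentIntoDisc.of_tendstoLocallyUniformlyOn {ι : Type*} {l : Filter ι} [l.NeBot]
    {U : Set ℂ} (hU : IsOpen U) (hUc : IsPreconnected U) {F : ι → ℂ → ℂ} {f : ℂ → ℂ}
    (hu : ∀ i, IsUnivalentIntoDisc U (F i)) (hF : TendstoLocallyUniformlyOn F f l U)
    {x₀ : ℂ} (hx₀ : x₀ ∈ U) (hf0 : f x₀ = 0) (hdf : deriv f x₀ ≠ 0) :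
    IsUnivalentIntoDisc U f := by
  have hd : ∀ i, DifferentiableOn ℂ (F i) U := fun i => (hu i).differentiableOn
  have hfd : DifferentiableOn ℂ f U := hF.differentiableOn (Eventually.of_forall hd) hU
  have han : AnalyticOnNhd ℂ f U := hfd.analyticOnNhd hU
  have hle : ∀ z ∈ U, ‖f z‖ ≤ 1 := fun z hz => le_of_tendsto (hF.tendsto_at hz).norm
    (Eventually.of_forall fun i => (mem_ball_zero_iff.mp ((hu i).mapsTo hz)).le)
  refine ⟨hfd, fun z hz => mem_ball_zero_iff.mpr (lt_of_le_of_ne (hle z hz) fun h1 => ?_), ?_, ?_⟩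
  · have := Complex.norm_eqOn_of_isPreconnected_of_isMaxOn hUc hU hfd hz
      (fun y hy => by simpa [h1] using hle y hy) hx₀
    simp [hf0, h1] at this
  · intro a ha b hb hab
    by_contra hne
    have hsub : U \ {b} ⊆ U := sdiff_subset
    have hlim : TendstoLocallyUniformlyOn (fun i z => F i z - F i b) (fun z => f z - f b) l
        (U \ {b}) := by
      refine (hF.mono hsub).sub ?_
      refine Metric.tendstoLocallyUniformlyOn_iff.mpr fun ε hε x hx => ⟨univ, univ_mem, ?_⟩
      filter_upwards [Metric.tendsto_nhds.mp (hF.tendsto_at hb) ε hε] with i hi y _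
      rwa [dist_comm]
    have hev := eventually_eq_zero_of_tendstoLocallyUniformlyOn
      (hU.sdiff isClosed_singleton) (fun i => ((hd i).mono hsub).sub_const _) hlim
      (fun i z hz h => hz.2 ((hu i).injOn hz.1 hb (sub_eq_zero.mp h)))
      (⟨ha, hne⟩ : a ∈ U \ {b}) (sub_eq_zero.mpr hab)
    have heq := han.eqOn_of_preconnected_of_eventuallyEq (analyticOnNhd_const (v := f b)) hUc ha
      (hev.mono fun z hz => sub_eq_zero.mp hz)
    apply hdf
    rw [(heq.eventuallyEq_of_mem (hU.mem_nhds hx₀)).deriv_eq, deriv_const]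
  · intro a ha h0
    have hev := eventually_eq_zero_of_tendstoLocallyUniformlyOn hU
      (fun i => ((hd i).deriv hU)) (hF.deriv (Eventually.of_forall hd) hU)
      (fun i z hz => (hu i).deriv_ne_zero z hz) ha h0
    exact hdf (han.deriv.eqOn_of_preconnected_of_eventuallyEq (analyticOnNhd_const (v := 0)) hUc ha
      hev hx₀)

/-- Among univalent maps into the disc vanishing at `x₀`, some map has maximal derivative there. -/
theorem exists_isUnivalentIntoDisc_isMax_norm_deriv {U : Set ℂ} (hU : IsOpen U)
    (hUc : IsPreconnected U) (hUb : Bornology.IsBounded U) {x₀ : ℂ} (hx₀ : x₀ ∈ U) :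
    ∃ f : ℂ → ℂ, IsUnivalentIntoDisc U f ∧ f x₀ = 0 ∧
      ∀ g, IsUnivalentIntoDisc U g → g x₀ = 0 → ‖deriv g x₀‖ ≤ ‖deriv f x₀‖ := by
  set S : Set ℝ := (fun f : ℂ → ℂ => ‖deriv f x₀‖) '' {f | IsUnivalentIntoDisc U f ∧ f x₀ = 0}
  have hSb : BddAbove S := by
    obtain ⟨r, hr, hrU⟩ := Metric.isOpen_iff.mp hU x₀ hx₀
    refine ⟨1 / r, ?_⟩
    rintro _ ⟨f, ⟨hf, hf0⟩, rfl⟩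
    exact Complex.norm_deriv_le_div_of_mapsTo_ball (hf.differentiableOn.mono hrU)
      (fun z hz => by rw [hf0]; exact ball_subset_closedBall (hf.mapsTo (hrU hz))) hr
  obtain ⟨R, hR, hUR⟩ := hUb.subset_ball_lt 0 x₀
  have hR' : (R : ℂ) ≠ 0 := Complex.ofReal_ne_zero.mpr hR.ne'
  have hscale : ∀ z, HasDerivAt (fun z => (z - x₀) / (R : ℂ)) (1 / R) z := fun z =>
    ((hasDerivAt_id z).sub_const x₀).div_const _
  have hscaleU : IsUnivalentIntoDisc U fun z => (z - x₀) / (R : ℂ) := by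
    refine ⟨fun z _ => (hscale z).differentiableAt.differentiableWithinAt, fun z hz => ?_,
      fun a _ b _ hab => ?_, fun z _ => ?_⟩
    · rw [mem_ball_zero_iff, norm_div, Complex.norm_real, Real.norm_of_nonneg hR.le, div_lt_one hR,
        ← dist_eq_norm]
      exact hUR hz
    · simpa [div_left_inj' hR'] using hab
    · rw [(hscale z).deriv]
      exact one_div_ne_zero hR'
  have hmem : 1 / R ∈ S := ⟨_, ⟨hscaleU, by simp⟩, by
    simp [(hscale x₀).deriv, abs_of_pos hR]⟩
  obtain ⟨u, -, hu, huS⟩ := exists_seq_tendsto_sSup ⟨_, hmem⟩ hSb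
  choose F hF hFu using huS
  obtain ⟨f, hlim⟩ := exists_tendstoLocallyUniformlyOn_of_mapsTo_ball (hyperfilter ℕ) hU
    (fun i => (hF i).1.differentiableOn) (fun i => (hF i).1.mapsTo)
  have hf0 : f x₀ = 0 := tendsto_nhds_unique (hlim.tendsto_at hx₀)
    (by simp [fun i => (hF i).2])
  have hderiv : ‖deriv f x₀‖ = sSup S := by
    refine tendsto_nhds_unique ((hlim.deriv (Eventually.of_forall fun i =>
      (hF i).1.differentiableOn) hU).tendsto_at hx₀).norm ?_
    simpa [hFu] using hu.mono_left Nat.hyperfilter_le_atTop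
  have hpos : 0 < ‖deriv f x₀‖ := by
    rw [hderiv]
    exact (one_div_pos.mpr hR).trans_le (le_csSup hSb hmem)
  refine ⟨f, .of_tendstoLocallyUniformlyOn hU hUc (fun i => (hF i).1) hlim hx₀ hf0
    (norm_pos_iff.mp hpos), hf0, fun g hg hg0 => ?_⟩
  rw [hderiv]
  exact le_csSup hSb ⟨g, ⟨hg, hg0⟩, rfl⟩

/-- **Riemann mapping theorem** for bounded domains. -/
theorem exists_isUnivalentIntoDisc_image_eq {U : Set ℂ} (hU : IsOpen U)
    (hUc : IsSimplyConnected U) (hUb : Bornology.IsBounded U) {x₀ : ℂ} (hx₀ : x₀ ∈ U) :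
    ∃ f : ℂ → ℂ, IsUnivalentIntoDisc U f ∧ f x₀ = 0 ∧ f '' U = ball 0 1 := by
  obtain ⟨f, hf, hf0, hmax⟩ := exists_isUnivalentIntoDisc_isMax_norm_deriv hU
    hUc.isPathConnected.isConnected.isPreconnected hUb hx₀
  refine ⟨f, hf, hf0, hf.mapsTo.image_subset.antisymm fun w hw => ?_⟩
  by_contra hwf
  obtain ⟨g, hg, hg0, hlt⟩ := hf.exists_norm_deriv_lt hU hUc hx₀ hf0 (mem_ball_zero_iff.mp hw) hwf
  exact (hmax g hg hg0).not_gt hlt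

theorem IsUnivalentIntoDisc.hasDerivAt_inverse {U : Set ℂ} {f g : ℂ → ℂ}
    (hf : IsUnivalentIntoDisc U f) (hU : IsOpen U) (hgf : ∀ z ∈ U, g (f z) = z) {z : ℂ}
    (hz : z ∈ U) : HasDerivAt g (deriv f z)⁻¹ (f z) := by
  have hs : HasStrictDerivAt f (deriv f z) z :=
    (hf.differentiableOn.analyticAt (hU.mem_nhds hz)).hasStrictDerivAt
  exact (hs.to_local_left_inverse (hf.deriv_ne_zero z hz)
    (eventually_of_mem (hU.mem_nhds hz) hgf)).hasDerivAt

/-- A holomorphic self-map of the disc preserving the norm is a rotation. -/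
theorem exists_eqOn_mul_of_norm_eq {α : ℂ → ℂ} (hd : DifferentiableOn ℂ α (ball 0 1))
    (hα : ∀ w ∈ ball (0 : ℂ) 1, ‖α w‖ = ‖w‖) : ∃ c : ℂ, ∀ w ∈ ball (0 : ℂ) 1, α w = c * w := by
  have h0 : α 0 = 0 := by simpa using hα 0 (by simp)
  have hhalf : (1 / 2 : ℂ) ∈ ball (0 : ℂ) 1 := by simp; norm_num
  refine ⟨dslope α 0 (1 / 2), fun w hw => ?_⟩
  have := Complex.affine_of_mapsTo_ball_of_norm_dslope_eq_div (R₂ := 1) hd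
    (fun z hz => by simpa [h0, hα z hz] using (mem_ball_zero_iff.mp hz).le) hhalf (by
      rw [dslope_of_ne _ (by norm_num), slope_def_field, h0, norm_div, sub_zero, sub_zero,
        hα _ hhalf]
      simp) hw
  simpa [h0, mul_comm] using this

/-- The radial contraction `g (t * f z)` transported from the disc by a Riemann map `f` of a
symmetric domain is Schwarz symmetric. -/
theorem IsUnivalentIntoDisc.conj_radial_contraction {D : Set ℂ} {f g : ℂ → ℂ} {x₀ : ℂ}
    (hf : IsUnivalentIntoDisc D f) (hD : IsOpen D) (hconj : ∀ z ∈ D, conj z ∈ D)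
    (hx₀ : x₀ ∈ D) (hx₀R : conj x₀ = x₀) (hf0 : f x₀ = 0)
    (hg : MapsTo g (ball 0 1) D) (hgf : ∀ z ∈ D, g (f z) = z)
    (hfg : ∀ w ∈ ball (0 : ℂ) 1, f (g w) = w) {t : ℝ} {z : ℂ} (hz : z ∈ D)
    (ht : (t : ℂ) * f z ∈ ball (0 : ℂ) 1) (ht' : (t : ℂ) * f (conj z) ∈ ball (0 : ℂ) 1) :
    g (t * f (conj z)) = conj (g (t * f z)) := by
  set α : ℂ → ℂ := fun w => conj (f (conj (g w)))
  have hd : DifferentiableOn ℂ α (ball 0 1) := by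
    intro w hw
    have h1 : HasDerivAt g (deriv f (g w))⁻¹ w := by
      simpa [hfg w hw] using hf.hasDerivAt_inverse hD hgf (hg hw)
    have h2 := (hf.differentiableOn.differentiableAt
      (hD.mem_nhds (hconj _ (hg hw)))).hasDerivAt.conj_conj
    rw [Complex.conj_conj] at h2
    exact (h2.comp w h1).differentiableAt.differentiableWithinAt
  have hmaps : ∀ w ∈ ball (0 : ℂ) 1, conj (α w) ∈ ball (0 : ℂ) 1 := fun w hw => by
    simpa only [α, Complex.conj_conj] using hf.mapsTo (hconj _ (hg hw))
  have hα0 : α 0 = 0 := by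
    simp only [α]
    rw [← hf0, hgf x₀ hx₀, hx₀R, hf0, map_zero]
  have hle : ∀ w ∈ ball (0 : ℂ) 1, ‖α w‖ ≤ ‖w‖ := fun w hw =>
    Complex.norm_le_norm_of_mapsTo_ball hd
      (fun v hv => ball_subset_closedBall (by simpa using hmaps v hv)) hα0 (mem_ball_zero_iff.mp hw)
  have hinv : ∀ w ∈ ball (0 : ℂ) 1, α (conj (α w)) = conj w := fun w hw => by
    simp only [α, Complex.conj_conj]
    rw [hgf _ (hconj _ (hg hw)), Complex.conj_conj, hfg w hw]
  obtain ⟨c, hc⟩ := exists_eqOn_mul_of_norm_eq hd fun w hw => (hle w hw).antisymm (by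
    simpa [hinv w hw] using hle _ (hmaps w hw))
  have key : ∀ y ∈ D, f (conj y) = conj (c * f y) := fun y hy => by
    rw [← hc _ (hf.mapsTo hy)]
    simp only [α]
    rw [hgf y hy, Complex.conj_conj]
  refine hf.injOn (hg ht') (hconj _ (hg ht)) ?_
  rw [hfg _ ht', key _ (hg ht), hfg _ ht, key z hz]
  simp only [map_mul, Complex.conj_ofReal]
  ring

/-- A nonempty open, connected, simply connected symmetric set `D ⊆ ℂ` meeting `ℝ`,
with closure a closed topological disc, admits a holomorphic Schwarz symmetric strong
deformation retraction onto a real point `x₀ ∈ D ∩ ℝ`. -/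
theorem symmetric_holomorphic_retraction_slice (D : Set ℂ)
    (hne : D.Nonempty) (hopen : IsOpen D) (hconn : IsConnected D)
    (hsc : SimplyConnectedSpace D)
    (hsym : (starRingEnd ℂ) '' D = D)
    (hdisc : Nonempty (closure D ≃ₜ closedBall (0 : ℂ) 1))
    (x₀ : ℂ) (hx₀ : x₀ ∈ D) (hx₀R : x₀.im = 0) :
    ∃ H : ℂ → ℝ → ℂ,
      ContinuousOn (fun p : ℂ × ℝ => H p.1 p.2) (D ×ˢ Icc (0 : ℝ) 1) ∧
      (∀ z ∈ D, ∀ t ∈ Icc (0 : ℝ) 1, H z t ∈ D) ∧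
      (∀ z ∈ D, H z 1 = z) ∧
      (∀ z ∈ D, H z 0 = x₀) ∧
      (∀ t ∈ Icc (0 : ℝ) 1, DifferentiableOn ℂ (fun z => H z t) D) ∧
      (∀ t ∈ Icc (0 : ℝ) 1, ∀ z ∈ D, H ((starRingEnd ℂ) z) t = (starRingEnd ℂ) (H z t)) := by
  have hb : Bornology.IsBounded D := by
    obtain ⟨e⟩ := hdisc
    have : CompactSpace (closure D) := e.symm.compactSpace
    exact (isCompact_iff_compactSpace.mpr this).isBounded.subset subset_closure
  obtain ⟨f, hf, hf0, himg⟩ := exists_isUnivalentIntoDisc_image_eq hopen hsc hb hx₀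
  have hconj : ∀ z ∈ D, conj z ∈ D := fun z hz => hsym ▸ mem_image_of_mem _ hz
  set g := Function.invFunOn f D
  have hsurj : ∀ w ∈ ball (0 : ℂ) 1, ∃ z ∈ D, f z = w := fun w hw => himg.ge hw
  have hg : MapsTo g (ball 0 1) D := fun w hw => Function.invFunOn_mem (hsurj w hw)
  have hfg : ∀ w ∈ ball (0 : ℂ) 1, f (g w) = w := fun w hw => Function.invFunOn_eq (hsurj w hw)
  have hgf : ∀ z ∈ D, g (f z) = z := fun z hz => hf.injOn.leftInvOn_invFunOn hz
  have hgd : DifferentiableOn ℂ g (ball 0 1) := fun w hw => by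
    have := hf.hasDerivAt_inverse hopen hgf (hg hw)
    rw [hfg w hw] at this
    exact this.differentiableAt.differentiableWithinAt
  have hball : ∀ z ∈ D, ∀ t ∈ Icc (0 : ℝ) 1, (t : ℂ) * f z ∈ ball (0 : ℂ) 1 := by
    intro z hz t ht
    rw [mem_ball_zero_iff, norm_mul, Complex.norm_real, Real.norm_of_nonneg ht.1]
    exact (mul_le_of_le_one_left (norm_nonneg _) ht.2).trans_lt
      (mem_ball_zero_iff.mp (hf.mapsTo hz))
  refine ⟨fun z t => g (t * f z), ?_, fun z hz t ht => hg (hball z hz t ht), fun z hz => ?_,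
    fun z hz => ?_, fun t ht => ?_, fun t ht z hz => ?_⟩
  · refine hgd.continuousOn.comp (ContinuousOn.mul (by fun_prop) ?_)
      fun p hp => hball p.1 hp.1 p.2 hp.2
    exact hf.differentiableOn.continuousOn.comp continuousOn_fst fun p hp => hp.1
  · simpa using hgf z hz
  · simpa [hf0] using hgf x₀ hx₀
  · exact hgd.comp (hf.differentiableOn.const_mul _) fun z hz => hball z hz t ht
  · exact hf.conj_radial_contraction hopen hconj hx₀ (Complex.conj_eq_iff_im.mpr hx₀R) hf0 hg hgf
      hfg hz (hball z hz t ht) (hball _ (hconj z hz) t ht)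
end

section
/- Let D ⊆ ℂ be a nonempty open, connected, simply connected symmetric set with D ∩ ℝ ≠ ∅ whose closure is homeomorphic to the closed unit disc. Let G be the set of all holomorphic, nowhere vanishing, Schwarz symmetric functions f : D → ℂ, equipped with the topology of uniform convergence on compact subsets of D. Then G has exactly two path components; two functions f, g ∈ G lie in the same path component if and only if f(x)·g(x) > 0 for every x ∈ D ∩ ℝ. -/
open Set Metric

/-- The set of continuous maps on `D` (with the compact-open topology, which on the
open set `D` is the topology of uniform convergence on compact subsets of `D`) that
are restrictions of holomorphic, nowhere vanishing, Schwarz symmetric functions. -/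
def schwarzNonvanishing (D : Set ℂ) : Set C(D, ℂ) :=
  {F | ∃ f : ℂ → ℂ, DifferentiableOn ℂ f D ∧ (∀ z ∈ D, f z ≠ 0) ∧
    (∀ z ∈ D, f ((starRingEnd ℂ) z) = (starRingEnd ℂ) (f z)) ∧
    ∀ z : D, F z = f (z : ℂ)}

open Filter Topology in
/-- A continuous branch of the logarithm of a differentiable function is differentiable. -/
theorem differentiableAt_of_exp_eq {f g : ℂ → ℂ} {z : ℂ} (hg : ContinuousAt g z)
    (hf : DifferentiableAt ℂ f z) (hfg : ∀ᶠ w in 𝓝 z, Complex.exp (g w) = f w) :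
    DifferentiableAt ℂ g z := by
  have hz : Complex.exp (g z) = f z := hfg.self_of_nhds
  have hne : f z ≠ 0 := hz ▸ Complex.exp_ne_zero _
  have hlog : DifferentiableAt ℂ (fun w => g z + Complex.log (f w / f z)) z := by
    refine (DifferentiableAt.clog (hf.div_const _) ?_).const_add _
    simp [div_self hne]
  have him : ContinuousAt (fun w => |(g w - g z).im|) z := by fun_prop
  have hlt : ∀ᶠ w in 𝓝 z, |(g w - g z).im| < Real.pi :=
    him.eventually_lt continuousAt_const (by simpa using Real.pi_pos)
  refine hlog.congr_of_eventuallyEq ?_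
  filter_upwards [hfg, hlt] with w hw hw'
  rw [abs_lt] at hw'
  rw [← hw, ← hz, ← Complex.exp_sub, Complex.log_exp hw'.1 hw'.2.le]
  ring

/-- A Schwarz symmetric nowhere vanishing holomorphic function on a simply connected symmetric
open set has a Schwarz symmetric holomorphic logarithm as soon as it is positive at one point of
the real line. -/
theorem exists_schwarz_symmetric_log {D : Set ℂ} (hopen : IsOpen D) (hsc : IsSimplyConnected D)
    (hsym : ∀ z ∈ D, (starRingEnd ℂ) z ∈ D) {f : ℂ → ℂ} (hf : DifferentiableOn ℂ f D)
    (hf0 : ∀ z ∈ D, f z ≠ 0)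
    (hfs : ∀ z ∈ D, f ((starRingEnd ℂ) z) = (starRingEnd ℂ) (f z))
    {x : ℂ} (hx : x ∈ D) (hxr : (starRingEnd ℂ) x = x) (hpos : 0 < (f x).re) :
    ∃ g : ℂ → ℂ, DifferentiableOn ℂ g D ∧ (∀ z ∈ D, Complex.exp (g z) = f z) ∧
      ∀ z ∈ D, g ((starRingEnd ℂ) z) = (starRingEnd ℂ) (g z) := by
  obtain ⟨g₀, hg₀c, hg₀⟩ := Complex.exists_continuousOn_eqOn_exp_comp hsc hopen hf.continuousOn
    (by rintro ⟨z, hz, h⟩; exact hf0 z hz h)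
  have hg₀' : ∀ z ∈ D, Complex.exp (g₀ z) = f z := fun z hz => hg₀ hz
  let g : ℂ → ℂ := fun z => g₀ z - g₀ x + Complex.log (f x)
  have hgc : ContinuousOn g D := by fun_prop
  have hge : ∀ z ∈ D, Complex.exp (g z) = f z := fun z hz => by
    simp only [g]
    rw [Complex.exp_add, Complex.exp_sub, hg₀' z hz, hg₀' x hx, Complex.exp_log (hf0 x hx),
      div_mul_cancel₀ _ (hf0 x hx)]
  have hgx : (starRingEnd ℂ) (g x) = g x := by
    have harg : (f x).arg ≠ Real.pi := fun h =>
      absurd (Complex.arg_eq_pi_iff.1 h).1 (not_lt.2 hpos.le)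
    have hfx := hfs x hx
    rw [hxr] at hfx
    simp only [g, sub_self, zero_add]
    rw [← Complex.log_conj _ harg, ← hfx]
  have hcc : ContinuousOn (fun z => (starRingEnd ℂ) (g ((starRingEnd ℂ) z))) D :=
    Complex.continuous_conj.comp_continuousOn
      (hgc.comp Complex.continuous_conj.continuousOn hsym)
  have heq : D.EqOn g (fun z => (starRingEnd ℂ) (g ((starRingEnd ℂ) z))) := by
    refine Complex.isCoveringMap_exp.eqOn_of_comp_eqOn
      hsc.isPathConnected.isConnected.isPreconnected hgc hcc (fun z hz => Subtype.ext ?_) hx ?_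
    · simp only [Function.comp_apply]
      rw [Complex.exp_conj, hge _ (hsym z hz), hge z hz, hfs z hz, Complex.conj_conj]
    · simp only [hxr, hgx]
  refine ⟨g, fun z hz => ?_, hge, fun z hz => ?_⟩
  · have hD := hopen.mem_nhds hz
    refine (differentiableAt_of_exp_eq (hgc.continuousAt hD) (hf.differentiableAt hD)
      ?_).differentiableWithinAt
    filter_upwards [hD] with w hw using hge w hw
  · rw [heq hz, Complex.conj_conj]

theorem schwarzNonvanishing_one_mem (D : Set ℂ) : (1 : C(D, ℂ)) ∈ schwarzNonvanishing D :=
  ⟨fun _ => 1, differentiableOn_const _, by simp, by simp, by simp⟩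

theorem schwarzNonvanishing_neg_mem {D : Set ℂ} {F : C(D, ℂ)}
    (hF : F ∈ schwarzNonvanishing D) : -F ∈ schwarzNonvanishing D := by
  obtain ⟨f, hf, hf0, hfs, hFf⟩ := hF
  refine ⟨fun z => -f z, hf.neg, fun z hz => neg_ne_zero.2 (hf0 z hz), fun z hz => ?_,
    fun z => ?_⟩
  · simp [hfs z hz]
  · simp [hFf z]

theorem schwarzNonvanishing_im_eq_zero {D : Set ℂ} {F : C(D, ℂ)}
    (hF : F ∈ schwarzNonvanishing D) {z : D} (hz : (z : ℂ).im = 0) : (F z).im = 0 := by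
  obtain ⟨f, -, -, hfs, hFf⟩ := hF
  have h := hfs z z.2
  rw [Complex.conj_eq_iff_im.2 hz] at h
  rw [hFf z]
  exact Complex.conj_eq_iff_im.1 h.symm

theorem schwarzNonvanishing_re_ne_zero {D : Set ℂ} {F : C(D, ℂ)}
    (hF : F ∈ schwarzNonvanishing D) {z : D} (hz : (z : ℂ).im = 0) : (F z).re ≠ 0 := by
  intro h
  have him := schwarzNonvanishing_im_eq_zero hF hz
  obtain ⟨f, -, hf0, -, hFf⟩ := hF
  exact hf0 z z.2 (hFf z ▸ Complex.ext h him)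

/-- A path of Schwarz symmetric nowhere vanishing functions preserves the sign at real points. -/
theorem JoinedIn.schwarzNonvanishing_pos {D : Set ℂ} {F G : C(D, ℂ)}
    (h : JoinedIn (schwarzNonvanishing D) F G) {z : D} (hz : (z : ℂ).im = 0) :
    0 < (F z * G z).re := by
  have hF := schwarzNonvanishing_re_ne_zero h.source_mem hz
  have hG := schwarzNonvanishing_re_ne_zero h.target_mem hz
  rw [Complex.mul_re, schwarzNonvanishing_im_eq_zero h.source_mem hz, zero_mul, sub_zero]
  obtain ⟨γ, hγ⟩ := h
  have hc : Continuous fun t => (γ t z).re :=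
    Complex.continuous_re.comp ((continuous_eval_const z).comp γ.continuous)
  by_contra hneg
  have h0 : ∃ t, (γ t z).re = 0 := by
    rcases lt_or_gt_of_ne hF with hF' | hF' <;> rcases lt_or_gt_of_ne hG with hG' | hG'
    · exact absurd (mul_pos_of_neg_of_neg hF' hG') hneg
    · exact mem_range_of_exists_le_of_exists_ge hc ⟨0, by simpa using hF'.le⟩
        ⟨1, by simpa using hG'.le⟩
    · exact mem_range_of_exists_le_of_exists_ge hc ⟨1, by simpa using hG'.le⟩
        ⟨0, by simpa using hF'.le⟩
    · exact absurd (mul_pos hF' hG') hneg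
  obtain ⟨t, ht⟩ := h0
  exact schwarzNonvanishing_re_ne_zero (hγ t) hz ht

theorem schwarzNonvanishing_joinedIn_one {D : Set ℂ} (hopen : IsOpen D)
    (hsc : IsSimplyConnected D) (hsym : ∀ z ∈ D, (starRingEnd ℂ) z ∈ D) {F : C(D, ℂ)}
    (hF : F ∈ schwarzNonvanishing D) {x : D} (hx : (x : ℂ).im = 0) (hpos : 0 < (F x).re) :
    JoinedIn (schwarzNonvanishing D) F 1 := by
  obtain ⟨f, hf, hf0, hfs, hFf⟩ := hF
  obtain ⟨g, hg, hge, hgs⟩ := exists_schwarz_symmetric_log hopen hsc hsym hf hf0 hfs x.2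
    (Complex.conj_eq_iff_im.2 hx) (hFf x ▸ hpos)
  have hgc : Continuous fun z : D => g z :=
    continuousOn_iff_continuous_domRestrict.1 hg.continuousOn
  let γ : ℝ → C(D, ℂ) := fun t =>
    ⟨fun z => Complex.exp (t * g z), Complex.continuous_exp.comp (continuous_const.mul hgc)⟩
  have hγ : Continuous γ := by
    refine ContinuousMap.continuous_of_continuous_uncurry _ ?_
    change Continuous fun p : ℝ × D => Complex.exp (p.1 * g p.2)
    exact Complex.continuous_exp.comp
      ((Complex.continuous_ofReal.comp continuous_fst).mul (hgc.comp continuous_snd))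
  refine (JoinedIn.ofLine (f := γ) hγ.continuousOn ?_ ?_ ?_).symm
  · ext z
    simp [γ]
  · ext z
    simp [γ, hge z z.2, hFf z]
  · rintro _ ⟨t, -, rfl⟩
    refine ⟨fun z => Complex.exp (t * g z), (hg.const_mul _).cexp,
      fun z _ => Complex.exp_ne_zero _, fun z hz => ?_, fun z => rfl⟩
    simp only
    rw [hgs z hz, ← Complex.exp_conj, map_mul, Complex.conj_ofReal]

theorem schwarzNonvanishing_joinedIn_neg_one {D : Set ℂ} (hopen : IsOpen D)
    (hsc : IsSimplyConnected D) (hsym : ∀ z ∈ D, (starRingEnd ℂ) z ∈ D) {F : C(D, ℂ)}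
    (hF : F ∈ schwarzNonvanishing D) {x : D} (hx : (x : ℂ).im = 0) (hneg : (F x).re < 0) :
    JoinedIn (schwarzNonvanishing D) F (-1) := by
  have h := (schwarzNonvanishing_joinedIn_one hopen hsc hsym (schwarzNonvanishing_neg_mem hF) hx
    (by simpa using hneg)).map (f := fun G : C(D, ℂ) => -G) continuous_neg
  rw [neg_neg] at h
  refine h.mono ?_
  rintro _ ⟨G, hG, rfl⟩
  exact schwarzNonvanishing_neg_mem hG

/-- For a basic slice-type symmetric domain `D`, the group of holomorphic nowhere
vanishing Schwarz symmetric functions on `D` has exactly two path components, and two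
such functions are joined by a path iff their product is positive on `D ∩ ℝ`. -/
theorem schwarzNonvanishing_two_path_components (D : Set ℂ)
    (hne : D.Nonempty) (hopen : IsOpen D) (hconn : IsConnected D)
    (hsc : SimplyConnectedSpace D)
    (hsym : (starRingEnd ℂ) '' D = D)
    (hR : ∃ x ∈ D, x.im = 0)
    (hdisc : Nonempty (closure D ≃ₜ closedBall (0 : ℂ) 1)) :
    (∃ F₀ ∈ schwarzNonvanishing D, ∃ F₁ ∈ schwarzNonvanishing D,
      ¬ JoinedIn (schwarzNonvanishing D) F₀ F₁ ∧
      ∀ F ∈ schwarzNonvanishing D,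
        JoinedIn (schwarzNonvanishing D) F F₀ ∨ JoinedIn (schwarzNonvanishing D) F F₁) ∧
    (∀ F ∈ schwarzNonvanishing D, ∀ G ∈ schwarzNonvanishing D,
      (JoinedIn (schwarzNonvanishing D) F G ↔
        ∀ z : D, (z : ℂ).im = 0 → 0 < (F z * G z).re)) := by
  obtain ⟨x, hxD, hx⟩ := hR
  have hconj : ∀ z ∈ D, (starRingEnd ℂ) z ∈ D := fun z hz => hsym ▸ mem_image_of_mem _ hz
  have hone := schwarzNonvanishing_one_mem D
  have hpos : ∀ F ∈ schwarzNonvanishing D, 0 < (F ⟨x, hxD⟩).re →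
      JoinedIn (schwarzNonvanishing D) F 1 := fun F hF h =>
    schwarzNonvanishing_joinedIn_one hopen hsc hconj hF hx h
  have hneg : ∀ F ∈ schwarzNonvanishing D, (F ⟨x, hxD⟩).re < 0 →
      JoinedIn (schwarzNonvanishing D) F (-1) := fun F hF h =>
    schwarzNonvanishing_joinedIn_neg_one hopen hsc hconj hF hx h
  refine ⟨⟨1, hone, -1, schwarzNonvanishing_neg_mem hone, fun h => ?_, fun F hF => ?_⟩,
    fun F hF G hG => ⟨fun h z hz => h.schwarzNonvanishing_pos hz, fun h => ?_⟩⟩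
  · have := h.schwarzNonvanishing_pos (z := ⟨x, hxD⟩) hx
    norm_num at this
  · rcases lt_or_gt_of_ne (schwarzNonvanishing_re_ne_zero hF (z := ⟨x, hxD⟩) hx) with h | h
    · exact Or.inr (hneg F hF h)
    · exact Or.inl (hpos F hF h)
  · have hFG := h ⟨x, hxD⟩ hx
    rw [Complex.mul_re, schwarzNonvanishing_im_eq_zero hF hx, zero_mul, sub_zero] at hFG
    rcases pos_and_pos_or_neg_and_neg_of_mul_pos hFG with ⟨h₁, h₂⟩ | ⟨h₁, h₂⟩
    · exact (hpos F hF h₁).trans (hpos G hG h₂).symm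
    · exact (hneg F hF h₁).trans (hneg G hG h₂).symm
end

section
/- Let U ⊆ ℂ⁺ be a nonempty open, connected, simply connected subset of the open upper half-plane whose closure is homeomorphic to the closed unit disc, and set D = U ∪ conj(U). Then the set of all holomorphic, nowhere vanishing, Schwarz symmetric functions f : D → ℂ, equipped with the topology of uniform convergence on compact subsets of D, is path-connected. -/
open Set Metric

/-- A nowhere vanishing holomorphic function on a simply connected open set has a holomorphic
logarithm. -/
theorem exists_differentiableOn_exp_eq {U : Set ℂ} (hU : IsSimplyConnected U) (hopen : IsOpen U)
    {f : ℂ → ℂ} (hf : DifferentiableOn ℂ f U) (hf₀ : ∀ z ∈ U, f z ≠ 0) :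
    ∃ g : ℂ → ℂ, DifferentiableOn ℂ g U ∧ ∀ z ∈ U, Complex.exp (g z) = f z := by
  obtain ⟨g, hgc, hg⟩ := Complex.exists_continuousOn_eqOn_exp_comp hU hopen hf.continuousOn
    (by rintro ⟨z, hz, h⟩; exact hf₀ z hz h)
  refine ⟨g, fun z hz ↦ ?_, hg⟩
  have hnhds := hopen.mem_nhds hz
  exact (HasDerivAt.of_comp_left (hgc.continuousAt hnhds) (Complex.hasDerivAt_exp (g z))
    (hf.differentiableAt hnhds).hasDerivAt (Complex.exp_ne_zero _)
    (hg.eventuallyEq_of_mem hnhds)).differentiableAt.differentiableWithinAt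

/-- A nowhere vanishing, Schwarz symmetric holomorphic function on `U ∪ conj U`, with `U` a simply
connected open subset of the upper half-plane, has a Schwarz symmetric holomorphic logarithm. -/
theorem exists_schwarzSymmetric_log {U : Set ℂ} (hU : IsSimplyConnected U) (hopen : IsOpen U)
    (hupper : ∀ z ∈ U, 0 < z.im) {f : ℂ → ℂ}
    (hf : DifferentiableOn ℂ f (U ∪ (starRingEnd ℂ) '' U))
    (hf₀ : ∀ z ∈ U ∪ (starRingEnd ℂ) '' U, f z ≠ 0)
    (hsymm : ∀ z ∈ U ∪ (starRingEnd ℂ) '' U,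
      f ((starRingEnd ℂ) z) = (starRingEnd ℂ) (f z)) :
    ∃ G : ℂ → ℂ, DifferentiableOn ℂ G (U ∪ (starRingEnd ℂ) '' U) ∧
      (∀ z ∈ U ∪ (starRingEnd ℂ) '' U, G ((starRingEnd ℂ) z) = (starRingEnd ℂ) (G z)) ∧
      ∀ z ∈ U ∪ (starRingEnd ℂ) '' U, Complex.exp (G z) = f z := by
  obtain ⟨g, hgd, hg⟩ := exists_differentiableOn_exp_eq hU hopen
    (hf.mono subset_union_left) (fun z hz ↦ hf₀ z (.inl hz))
  let G : ℂ → ℂ := fun z ↦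
    if 0 < z.im then g z else (starRingEnd ℂ) (g ((starRingEnd ℂ) z))
  have hGU : ∀ z, 0 < z.im → G z = g z := fun z hz ↦ if_pos hz
  have hGconj : ∀ z, z.im < 0 → G z = (starRingEnd ℂ) (g ((starRingEnd ℂ) z)) :=
    fun z hz ↦ if_neg hz.le.not_gt
  have him : ∀ z ∈ U, ((starRingEnd ℂ) z).im < 0 := fun z hz ↦ by simpa using hupper z hz
  refine ⟨G, ?_, ?_, ?_⟩
  · rintro _ (hz | ⟨z, hz, rfl⟩) <;> apply DifferentiableAt.differentiableWithinAt
    · refine (hgd.differentiableAt (hopen.mem_nhds hz)).congr_of_eventuallyEq ?_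
      filter_upwards [hopen.mem_nhds hz] with w hw using hGU w (hupper w hw)
    · refine (hgd.differentiableAt (hopen.mem_nhds hz)).conj_conj.congr_of_eventuallyEq ?_
      filter_upwards [(isOpen_lt Complex.continuous_im continuous_const).mem_nhds (him z hz)]
        with w hw using hGconj w hw
  · rintro _ (hz | ⟨z, hz, rfl⟩)
    · rw [hGconj _ (him _ hz), hGU _ (hupper _ hz), Complex.conj_conj]
    · rw [hGconj _ (him _ hz), Complex.conj_conj, hGU _ (hupper _ hz), Complex.conj_conj]
  · rintro _ (hz | ⟨z, hz, rfl⟩)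
    · rw [hGU _ (hupper _ hz), hg _ hz]
    · rw [hGconj _ (him _ hz), Complex.conj_conj, Complex.exp_conj, hg _ hz,
        hsymm _ (.inl hz)]

/-- For a basic product-type symmetric domain `D = U ∪ conj(U)` (`U` a nonempty open,
connected, simply connected subset of the upper half-plane with closed-disc closure),
the set of holomorphic, nowhere vanishing, Schwarz symmetric functions on `D`, with
the topology of uniform convergence on compact subsets of `D`, is path-connected. -/
theorem schwarzNonvanishing_pathConnected_product (U : Set ℂ)
    (hne : U.Nonempty) (hopen : IsOpen U) (hconn : IsConnected U)
    (hsc : SimplyConnectedSpace U)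
    (hupper : ∀ z ∈ U, 0 < z.im)
    (hdisc : Nonempty (closure U ≃ₜ closedBall (0 : ℂ) 1))
    (D : Set ℂ) (hD : D = U ∪ (starRingEnd ℂ) '' U) :
    IsPathConnected (schwarzNonvanishing D) := by
  subst hD
  refine ⟨1, ⟨fun _ ↦ 1, differentiableOn_const _, by simp, by simp, by simp⟩, ?_⟩
  rintro F ⟨f, hf, hf₀, hsymm, hF⟩
  obtain ⟨G, hGd, hGsymm, hG⟩ :=
    exists_schwarzSymmetric_log hsc hopen hupper hf hf₀ hsymm
  have hGc : Continuous fun z : ↥(U ∪ (starRingEnd ℂ) '' U) ↦ G z :=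
    hGd.continuousOn.domRestrict
  let H : C(unitInterval × ↥(U ∪ (starRingEnd ℂ) '' U), ℂ) :=
    ⟨fun p ↦ Complex.exp (((p.1 : ℝ) : ℂ) * G p.2), by
      have := hGc.comp (continuous_snd (X := unitInterval))
      exact ((Complex.continuous_ofReal.comp (by fun_prop)).mul this).cexp⟩
  refine ⟨⟨H.curry, ?_, ?_⟩, fun t ↦
    ⟨fun z ↦ Complex.exp (((t : ℝ) : ℂ) * G z), ?_, fun _ _ ↦ Complex.exp_ne_zero _, ?_,
      fun _ ↦ rfl⟩⟩
  · ext z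
    simp [H]
  · ext z
    simp [H, hF, hG z z.2]
  · exact (hGd.const_mul _).cexp
  · intro z hz
    beta_reduce
    rw [hGsymm z hz, ← Complex.exp_conj, map_mul, Complex.conj_ofReal]
end

section
/- Let D ⊆ ℂ be a symmetric open set which is basic with closed-disc closure, i.e. either (slice case) D is nonempty, connected, simply connected, D ∩ ℝ ≠ ∅ and the closure of D is homeomorphic to the closed unit disc, or (product case) D = U ∪ conj(U) where U ⊆ ℂ⁺ is nonempty, open, connected, simply connected and the closure of U is homeomorphic to the closed unit disc. Let f : D → ℂ be holomorphic, nowhere vanishing and Schwarz symmetric, and in the slice case assume additionally that f > 0 on D ∩ ℝ. Let K ⊆ D be a symmetric compact set. Then there exist finitely many holomorphic, nowhere vanishing, Schwarz symmetric functions f₁, …, f_n : D → ℂ such that f = f₁ · f₂ ⋯ f_n on D and sup_{z ∈ K} |f_m(z) − 1| < 1 for every m = 1, …, n. -/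
open Set Metric

/-- A holomorphic nowhere vanishing function on a simply connected open set has a holomorphic
logarithm. -/
theorem exists_differentiableOn_log {U : Set ℂ} (hUc : IsSimplyConnected U) (hUo : IsOpen U)
    {f : ℂ → ℂ} (hf : DifferentiableOn ℂ f U) (hfne : ∀ z ∈ U, f z ≠ 0) :
    ∃ g : ℂ → ℂ, DifferentiableOn ℂ g U ∧ ∀ z ∈ U, Complex.exp (g z) = f z := by
  obtain ⟨g, hgc, hg⟩ := Complex.exists_continuousOn_eqOn_exp_comp hUc hUo hf.continuousOn
    (by rintro ⟨z, hz, h0⟩; exact hfne z hz h0)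
  refine ⟨g, fun z hz => DifferentiableAt.differentiableWithinAt ?_, hg⟩
  have hgz : ContinuousAt g z := hgc.continuousAt (hUo.mem_nhds hz)
  have hfz : DifferentiableAt ℂ f z := hf.differentiableAt (hUo.mem_nhds hz)
  have hloc : g =ᶠ[nhds z] fun w => g z + Complex.log (f w / f z) := by
    filter_upwards [hUo.mem_nhds hz, Metric.continuousAt_iff'.mp hgz Real.pi Real.pi_pos]
      with w hw hwd
    have him : |(g w - g z).im| < Real.pi :=
      (Complex.abs_im_le_norm _).trans_lt (by rwa [dist_eq_norm] at hwd)
    rw [abs_lt] at him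
    have hexp : f w / f z = Complex.exp (g w - g z) := by
      rw [Complex.exp_sub, ← hg hw, ← hg hz]; rfl
    rw [hexp, Complex.log_exp him.1 him.2.le]
    ring
  refine DifferentiableAt.congr_of_eventuallyEq ?_ hloc
  refine ((hfz.div_const _).clog ?_).const_add _
  rw [div_self (hfne z hz)]
  exact Complex.one_mem_slitPlane

/-- Two holomorphic logarithms of the same function on a preconnected open set agree as soon as
they agree at one point. -/
theorem eqOn_of_exp_eq {D : Set ℂ} (hDo : IsOpen D) (hDc : IsPreconnected D) {g₁ g₂ : ℂ → ℂ}
    (h₁ : DifferentiableOn ℂ g₁ D) (h₂ : DifferentiableOn ℂ g₂ D)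
    (hexp : ∀ z ∈ D, Complex.exp (g₁ z) = Complex.exp (g₂ z))
    {x : ℂ} (hx : x ∈ D) (heq : g₁ x = g₂ x) : EqOn g₁ g₂ D := by
  refine hDo.eqOn_of_deriv_eq hDc h₁ h₂ (fun z hz => ?_) hx heq
  have d₁ := (h₁.differentiableAt (hDo.mem_nhds hz)).hasDerivAt.cexp
  have d₂ := (h₂.differentiableAt (hDo.mem_nhds hz)).hasDerivAt.cexp
  have hev : (fun w => Complex.exp (g₁ w)) =ᶠ[nhds z] fun w => Complex.exp (g₂ w) := by
    filter_upwards [hDo.mem_nhds hz] with w hw using hexp w hw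
  have h := d₁.unique (d₂.congr_of_eventuallyEq hev)
  rw [hexp z hz] at h
  exact mul_left_cancel₀ (Complex.exp_ne_zero _) h

/-- If `f` is positive at a real point of a symmetric simply connected domain, then it has a
Schwarz symmetric holomorphic logarithm. -/
theorem exists_symmetric_log_of_pos {D : Set ℂ} (hDo : IsOpen D) (hDc : IsSimplyConnected D)
    (hDsym : ∀ z ∈ D, (starRingEnd ℂ) z ∈ D) {f : ℂ → ℂ}
    (hf : DifferentiableOn ℂ f D) (hfne : ∀ z ∈ D, f z ≠ 0)
    (hfsym : ∀ z ∈ D, f ((starRingEnd ℂ) z) = (starRingEnd ℂ) (f z))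
    {x : ℂ} (hx : x ∈ D) (hxim : x.im = 0) (hpos : 0 < (f x).re) :
    ∃ g : ℂ → ℂ, DifferentiableOn ℂ g D ∧ (∀ z ∈ D, Complex.exp (g z) = f z) ∧
      ∀ z ∈ D, g ((starRingEnd ℂ) z) = (starRingEnd ℂ) (g z) := by
  obtain ⟨g, hgd, hg⟩ := exists_differentiableOn_log hDc hDo hf hfne
  have hxconj : (starRingEnd ℂ) x = x := Complex.conj_eq_iff_im.mpr hxim
  have hfx : (starRingEnd ℂ) (f x) = f x := by rw [← hfsym x hx, hxconj]
  have hlog : (starRingEnd ℂ) (Complex.log (f x)) = Complex.log (f x) := by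
    rw [← Complex.log_conj _ (Complex.slitPlane_arg_ne_pi (Or.inl hpos)), hfx]
  let G : ℂ → ℂ := fun z => g z - g x + Complex.log (f x)
  have hGd : DifferentiableOn ℂ G D := (hgd.sub_const _).add_const _
  have hG : ∀ z ∈ D, Complex.exp (G z) = f z := fun z hz => by
    simp only [G]
    rw [Complex.exp_add, Complex.exp_sub, hg z hz, hg x hx, Complex.exp_log (hfne x hx),
      div_mul_cancel₀ _ (hfne x hx)]
  refine ⟨G, hGd, hG, fun z hz => ?_⟩
  have hconj : DifferentiableOn ℂ ((starRingEnd ℂ) ∘ G ∘ (starRingEnd ℂ)) D := fun w hw =>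
    (differentiableAt_conj_conj_iff.mpr
      (hGd.differentiableAt (hDo.mem_nhds (hDsym w hw)))).differentiableWithinAt
  have heq := eqOn_of_exp_eq hDo hDc.isPathConnected.isConnected.isPreconnected hGd hconj
    (fun w hw => by
      simp only [Function.comp_apply]
      rw [Complex.exp_conj, hG w hw, hG _ (hDsym w hw), hfsym w hw, Complex.conj_conj])
    hx (by simp only [Function.comp_apply]; rw [hxconj]; simp [G, hlog])
  rw [heq (hDsym z hz)]
  simp

/-- On a union of a simply connected open set in the upper half-plane with its mirror image, a
nowhere vanishing Schwarz symmetric function has a Schwarz symmetric holomorphic logarithm. -/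
theorem exists_symmetric_log_of_upperHalfPlane {U : Set ℂ} (hUo : IsOpen U)
    (hUc : IsSimplyConnected U) (hUim : ∀ z ∈ U, 0 < z.im) {f : ℂ → ℂ}
    (hf : DifferentiableOn ℂ f (U ∪ (starRingEnd ℂ) '' U))
    (hfne : ∀ z ∈ U ∪ (starRingEnd ℂ) '' U, f z ≠ 0)
    (hfsym : ∀ z ∈ U ∪ (starRingEnd ℂ) '' U, f ((starRingEnd ℂ) z) = (starRingEnd ℂ) (f z)) :
    ∃ g : ℂ → ℂ, DifferentiableOn ℂ g (U ∪ (starRingEnd ℂ) '' U) ∧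
      (∀ z ∈ U ∪ (starRingEnd ℂ) '' U, Complex.exp (g z) = f z) ∧
      ∀ z ∈ U ∪ (starRingEnd ℂ) '' U, g ((starRingEnd ℂ) z) = (starRingEnd ℂ) (g z) := by
  obtain ⟨g, hgd, hg⟩ := exists_differentiableOn_log hUc hUo (hf.mono subset_union_left)
    fun z hz => hfne z (Or.inl hz)
  let G : ℂ → ℂ := fun z => if 0 < z.im then g z else (starRingEnd ℂ) (g ((starRingEnd ℂ) z))
  have hGup : ∀ z : ℂ, 0 < z.im → G z = g z := fun z hz => if_pos hz
  have hGdown : ∀ z : ℂ, z.im < 0 → G z = (starRingEnd ℂ) (g ((starRingEnd ℂ) z)) :=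
    fun z hz => if_neg hz.not_gt
  have hconj : ∀ z ∈ U, ((starRingEnd ℂ) z).im < 0 := fun z hz => by simpa using hUim z hz
  refine ⟨G, ?_, ?_, ?_⟩
  · rintro z (hz | ⟨w, hw, rfl⟩) <;> refine DifferentiableAt.differentiableWithinAt ?_
    · refine (hgd.differentiableAt (hUo.mem_nhds hz)).congr_of_eventuallyEq ?_
      filter_upwards [(isOpen_lt continuous_const Complex.continuous_im).mem_nhds (hUim z hz)]
        with w hw using hGup w hw
    · have hd : DifferentiableAt ℂ ((starRingEnd ℂ) ∘ g ∘ (starRingEnd ℂ)) ((starRingEnd ℂ) w) :=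
        (hgd.differentiableAt (hUo.mem_nhds hw)).conj_conj
      refine hd.congr_of_eventuallyEq ?_
      filter_upwards [(isOpen_lt Complex.continuous_im continuous_const).mem_nhds (hconj w hw)]
        with v hv using hGdown v hv
  · rintro z (hz | ⟨w, hw, rfl⟩)
    · rw [hGup z (hUim z hz), hg z hz]
    · rw [hGdown _ (hconj w hw), Complex.conj_conj, Complex.exp_conj, hg w hw,
        hfsym w (Or.inl hw)]
  · rintro z (hz | ⟨w, hw, rfl⟩)
    · rw [hGdown _ (hconj z hz), Complex.conj_conj, hGup z (hUim z hz)]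
    · rw [hGdown _ (hconj w hw), Complex.conj_conj, Complex.conj_conj, hGup w (hUim w hw)]

/-- A function with a Schwarz symmetric holomorphic logarithm is a product of Schwarz symmetric
functions arbitrarily close to `1` on a compact set, namely its roots `exp (g / n)`. -/
theorem exists_factorization_of_log {D : Set ℂ} {f g : ℂ → ℂ} (hgd : DifferentiableOn ℂ g D)
    (hg : ∀ z ∈ D, Complex.exp (g z) = f z)
    (hgsym : ∀ z ∈ D, g ((starRingEnd ℂ) z) = (starRingEnd ℂ) (g z))
    {K : Set ℂ} (hK : IsCompact K) (hKD : K ⊆ D) :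
    ∃ (n : ℕ) (F : Fin n → (ℂ → ℂ)),
      (∀ m, DifferentiableOn ℂ (F m) D) ∧
      (∀ m, ∀ z ∈ D, F m z ≠ 0) ∧
      (∀ m, ∀ z ∈ D, F m ((starRingEnd ℂ) z) = (starRingEnd ℂ) (F m z)) ∧
      (∀ z ∈ D, f z = ∏ m, F m z) ∧
      (∀ m, ∀ z ∈ K, ‖F m z - 1‖ < 1) := by
  obtain ⟨M, hM⟩ := hK.exists_bound_of_continuousOn (hgd.continuousOn.mono hKD)
  obtain ⟨n, hn⟩ := exists_nat_gt (max 0 (2 * M))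
  have hn0 : (0 : ℝ) < n := (le_max_left _ _).trans_lt hn
  have hnM : 2 * M < n := (le_max_right _ _).trans_lt hn
  have hnC : (n : ℂ) ≠ 0 := by exact_mod_cast hn0.ne'
  refine ⟨n, fun _ z => Complex.exp (g z / n), fun _ => (hgd.div_const _).cexp,
    fun _ _ _ => Complex.exp_ne_zero _, fun _ z hz => ?_, fun z hz => ?_, fun _ z hz => ?_⟩
  · beta_reduce
    rw [hgsym z hz, ← Complex.exp_conj, map_div₀, Complex.conj_natCast]
  · rw [Finset.prod_const, Finset.card_univ, Fintype.card_fin, ← Complex.exp_nat_mul,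
      mul_div_cancel₀ _ hnC, hg z hz]
  · have hsmall : ‖g z / n‖ < 1 / 2 := by
      rw [norm_div, Complex.norm_natCast, div_lt_iff₀ hn0]
      linarith [hM z hz]
    linarith [Complex.norm_exp_sub_one_le (x := g z / n) (by linarith)]

/-- Factorization into functions near `1`: on a basic symmetric domain `D` with
closed-disc closure, a holomorphic, nowhere vanishing, Schwarz symmetric function `f`
(positive on `D ∩ ℝ` in the slice case) factors, for any symmetric compact `K ⊆ D`,
as a finite product of holomorphic nowhere vanishing Schwarz symmetric functions each
uniformly within `1` of the constant `1` on `K`. -/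
theorem factorization_near_one (D : Set ℂ) (f : ℂ → ℂ)
    (hbasic :
      (D.Nonempty ∧ IsOpen D ∧ IsConnected D ∧ SimplyConnectedSpace D ∧
        (∃ x ∈ D, x.im = 0) ∧ (starRingEnd ℂ) '' D = D ∧
        Nonempty (closure D ≃ₜ closedBall (0 : ℂ) 1) ∧
        (∀ x ∈ D, x.im = 0 → 0 < (f x).re)) ∨
      (∃ U : Set ℂ, U.Nonempty ∧ IsOpen U ∧ IsConnected U ∧ SimplyConnectedSpace U ∧
        (∀ z ∈ U, 0 < z.im) ∧ Nonempty (closure U ≃ₜ closedBall (0 : ℂ) 1) ∧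
        D = U ∪ (starRingEnd ℂ) '' U))
    (hf : DifferentiableOn ℂ f D) (hfne : ∀ z ∈ D, f z ≠ 0)
    (hfsym : ∀ z ∈ D, f ((starRingEnd ℂ) z) = (starRingEnd ℂ) (f z))
    (K : Set ℂ) (hK : IsCompact K) (hKD : K ⊆ D) (hKsym : (starRingEnd ℂ) '' K = K) :
    ∃ (n : ℕ) (F : Fin n → (ℂ → ℂ)),
      (∀ m, DifferentiableOn ℂ (F m) D) ∧
      (∀ m, ∀ z ∈ D, F m z ≠ 0) ∧
      (∀ m, ∀ z ∈ D, F m ((starRingEnd ℂ) z) = (starRingEnd ℂ) (F m z)) ∧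
      (∀ z ∈ D, f z = ∏ m, F m z) ∧
      (∀ m, ∀ z ∈ K, ‖F m z - 1‖ < 1) := by
  obtain ⟨g, hgd, hg, hgsym⟩ : ∃ g : ℂ → ℂ, DifferentiableOn ℂ g D ∧
      (∀ z ∈ D, Complex.exp (g z) = f z) ∧
      ∀ z ∈ D, g ((starRingEnd ℂ) z) = (starRingEnd ℂ) (g z) := by
    rcases hbasic with ⟨-, hDo, -, hDc, ⟨x, hx, hxim⟩, hDsym, -, hpos⟩ |
      ⟨U, -, hUo, -, hUc, hUim, -, rfl⟩
    · exact exists_symmetric_log_of_pos hDo hDc (fun z hz => hDsym ▸ mem_image_of_mem _ hz)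
        hf hfne hfsym hx hxim (hpos x hx hxim)
    · exact exists_symmetric_log_of_upperHalfPlane hUo hUc hUim hf hfne hfsym
  exact exists_factorization_of_log hgd hg hgsym hK hKD
end
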